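/- For every b ∈ ℝ, every v ∈ ℝ² and every M ∈ 𝕊₀², there exist q ∈ ℝ and w ∈ ℝ² such that (b, w, v, M, q) ∈ Λ, i.e., there exists ξ ∈ ℝ³∖{0} with V((b,w,v,M,q)) ξ = 0. -/

import Mathlib

/-!
If `v ≠ 0`, the third row forces the first two components of `ξ` to be a multiple of
`v⊥ = (-v₁, v₀)`. Take `ξ = (v⊥, s)`: since `(v, v⊥)` is an orthogonal basis of `ℝ²`, the equation
`M v⊥ + q v⊥ + s v = 0` is solved by `q = -⟨v⊥, M v⊥⟩ / |v|²`, `s = -⟨v, M v⊥⟩ / |v|²`, and then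
`w = -(b s / |v|²) v⊥` takes care of the fourth row. If `v = 0`, take `-q` to be an eigenvalue of
`M`, `ξ = (η, 0)` with `η` an eigenvector, and `w = 0`.
-/

open Matrix

noncomputable section

/-- The 4×3 matrix `V(z)` associated to a state `z = (b, w, v, M, q)`: first two rows
`(M + q I₂ | v)`, third row `(vᵀ | 0)`, fourth row `(wᵀ | b)`. -/
def VmatM (b : ℝ) (w v : Fin 2 → ℝ) (M : Matrix (Fin 2) (Fin 2) ℝ) (q : ℝ) :
    Matrix (Fin 4) (Fin 3) ℝ :=
  ![![M 0 0 + q, M 0 1, v 0],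
    ![M 1 0, M 1 1 + q, v 1],
    ![v 0, v 1, 0],
    ![w 0, w 1, b]]

/-- For every `b ∈ ℝ`, `v ∈ ℝ²` and symmetric traceless `M`, there exist
`q ∈ ℝ` and `w ∈ ℝ²` with `(b, w, v, M, q)` in the wave cone `Λ`, i.e. some `ξ ≠ 0` is
annihilated by `V((b,w,v,M,q))`. -/
theorem stmt_9 (b : ℝ) (v : Fin 2 → ℝ) (M : Matrix (Fin 2) (Fin 2) ℝ)
    (hsymm : M.IsSymm) (htr : M.trace = 0) :
    ∃ (q : ℝ) (w : Fin 2 → ℝ) (ξ : Fin 3 → ℝ), ξ ≠ 0 ∧ VmatM b w v M q *ᵥ ξ = 0 := by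
  have hc : M 1 0 = M 0 1 := hsymm.apply 0 1
  have ha : M 1 1 = -M 0 0 := by
    rw [Matrix.trace_fin_two] at htr
    linarith
  -- The four scalar equations suffice.
  suffices H : ∃ q w0 w1 x y s : ℝ, ¬ (x = 0 ∧ y = 0) ∧
      (M 0 0 + q) * x + M 0 1 * y + v 0 * s = 0 ∧
      M 0 1 * x + (-M 0 0 + q) * y + v 1 * s = 0 ∧
      v 0 * x + v 1 * y = 0 ∧ w0 * x + w1 * y + b * s = 0 by
    obtain ⟨q, w0, w1, x, y, s, hne, h0, h1, h2, h3⟩ := H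
    refine ⟨q, ![w0, w1], ![x, y, s], ?_, ?_⟩
    · intro h
      exact hne ⟨by simpa using congrFun h 0, by simpa using congrFun h 1⟩
    · ext i
      fin_cases i <;>
        simp [VmatM, Matrix.mulVec, dotProduct, Fin.sum_univ_three, hc, ha] <;> linarith
  generalize M 0 0 = a
  generalize M 0 1 = c
  generalize v 0 = x
  generalize v 1 = y
  by_cases hv : x = 0 ∧ y = 0
  · obtain ⟨rfl, rfl⟩ := hv
    -- The eigenvalues of `M` are `±√(a² + c²)`.
    have hq : √(a ^ 2 + c ^ 2) ^ 2 = a ^ 2 + c ^ 2 := Real.sq_sqrt (by positivity)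
    generalize √(a ^ 2 + c ^ 2) = q at hq
    by_cases h : -c = 0 ∧ a + q = 0
    · exact ⟨q, 0, 0, 1, 0, 0, by simp, by linarith [h.2], by linarith [h.1], by simp, by simp⟩
    · exact ⟨q, 0, 0, -c, a + q, 0, h, by ring, by linear_combination hq, by simp, by simp⟩
  · have hN : x ^ 2 + y ^ 2 ≠ 0 := by
      intro h
      exact hv ⟨by nlinarith [sq_nonneg x, sq_nonneg y], by nlinarith [sq_nonneg x, sq_nonneg y]⟩
    obtain ⟨s, hs⟩ : ∃ s, s = (2 * a * x * y - c * x ^ 2 + c * y ^ 2) / (x ^ 2 + y ^ 2) := ⟨_, rfl⟩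
    refine ⟨(a * x ^ 2 + 2 * c * x * y - a * y ^ 2) / (x ^ 2 + y ^ 2),
      b * s * y / (x ^ 2 + y ^ 2), -(b * s * x) / (x ^ 2 + y ^ 2), -y, x, s, ?_, ?_, ?_, ?_, ?_⟩
    · rintro ⟨h1, h2⟩
      exact hv ⟨h2, neg_eq_zero.mp h1⟩
    · rw [hs]
      field_simp
      ring
    · rw [hs]
      field_simp
      ring
    · ring
    · field_simp
      ring
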